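/- Let μ be a nonzero, σ-finite, nonnegative Borel measure on (0,∞) such that ∫ exp(−ε·θ²/2) μ(dθ) < ∞ for every ε > 0, and let b : (0,∞) → ℝ satisfy r_μ(t, b(t)) = 1 for every t ∈ (0,∞). Then b is real-analytic on (0,∞). -/

import Mathlib

open MeasureTheory Set Filter
open scoped ENNReal NNReal Topology

noncomputable def rTheta (θ t x : ℝ) : ℝ := Real.exp (-θ ^ 2 / (2 * t) + θ * x / t)

noncomputable def rMu (μ : Measure ℝ) (t x : ℝ) : ℝ≥0∞ :=
  ∫⁻ θ, ENNReal.ofReal (rTheta θ t x) ∂μ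

/-! For `t > 0` the function `x ↦ rMu μ t x` is strictly increasing, so the level condition
determines `b t`, and continuity in `t` carries over to `b`. In the variables `s = 1 / t`,
`y = x / t` the exponent of `rTheta` is linear in `(s, y)`, and the Gaussian integrability of `μ`
allows differentiation under the integral sign, so `rMu μ` extends to a holomorphic function of two
complex variables near every real point with `t > 0`. Its derivative in `x` is positive at such a
point, since `μ` lives on `(0, ∞)`. The holomorphic implicit function theorem then yields a
holomorphic function which, by continuity of `b`, restricts to `b` on a real neighbourhood. -/

section ImplicitFunctions

lemma continuousAt_of_strictMono_of_eventually_apply_eq {X α β : Type*} [TopologicalSpace X]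
    [LinearOrder α] [TopologicalSpace α] [OrderTopology α]
    [LinearOrder β] [TopologicalSpace β] [OrderClosedTopology β]
    {G : X → α → β} {f : X → α} {x₀ : X} {c : β} (hmono : ∀ᶠ x in 𝓝 x₀, StrictMono (G x))
    (hcont : ∀ a, ContinuousAt (fun x ↦ G x a) x₀) (hf : ∀ᶠ x in 𝓝 x₀, G x (f x) = c) :
    ContinuousAt f x₀ := by
  have hmono₀ := hmono.self_of_nhds
  have hf₀ := hf.self_of_nhds
  refine tendsto_order.2 ⟨fun a ha ↦ ?_, fun a ha ↦ ?_⟩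
  · filter_upwards [hmono, hf, (hcont a).eventually_lt_const (hf₀ ▸ hmono₀ ha)]
      with x hx hfx hxc
    exact hx.lt_iff_lt.1 (hfx ▸ hxc)
  · filter_upwards [hmono, hf, (hcont a).eventually_const_lt (hf₀ ▸ hmono₀ ha)]
      with x hx hfx hxc
    exact hx.lt_iff_lt.1 (hfx ▸ hxc)

lemma isInvertible_fderiv_comp_inr_of_deriv_ne_zero {𝕜 E : Type*} [NontriviallyNormedField 𝕜]
    [NormedAddCommGroup E] [NormedSpace 𝕜 E] {F : E × 𝕜 → 𝕜} {u : E × 𝕜}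
    (hF : DifferentiableAt 𝕜 F u) (hderiv : deriv (fun w ↦ F (u.1, w)) u.2 ≠ 0) :
    (fderiv 𝕜 F u ∘L .inr 𝕜 E 𝕜).IsInvertible := by
  have hsection : HasFDerivAt (fun w ↦ F (u.1, w)) (fderiv 𝕜 F u ∘L .inr 𝕜 E 𝕜) u.2 :=
    hF.hasFDerivAt.comp u.2 (hasFDerivAt_prodMk_right u.1 u.2)
  refine ⟨ContinuousLinearEquiv.unitsEquivAut 𝕜 (Units.mk0 _ hderiv), ?_⟩
  ext
  simp [hsection.hasDerivAt.deriv]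

lemma analyticAt_of_contDiffAt_of_eventually_apply_eq {E F : Type*}
    [NormedAddCommGroup E] [NormedSpace ℂ E] [CompleteSpace E]
    [NormedAddCommGroup F] [NormedSpace ℂ F] [CompleteSpace F]
    {G : ℂ × E → F} {f : ℝ → E} {t₀ : ℝ} (hG : ContDiffAt ℂ 1 G (t₀, f t₀))
    (hinv : (fderiv ℂ G (t₀, f t₀) ∘L .inr ℂ ℂ E).IsInvertible) (hf : ContinuousAt f t₀)
    (heq : ∀ᶠ t : ℝ in 𝓝 t₀, G (t, f t) = G (t₀, f t₀)) :
    AnalyticAt ℝ f t₀ := by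
  set ψ := hG.implicitFunction one_ne_zero hinv
  have hψ : AnalyticAt ℂ ψ t₀ := by
    rw [Complex.analyticAt_iff_eventually_differentiableAt]
    exact ((hG.contDiffAt_implicitFunction one_ne_zero hinv).eventually (by simp)).mono
      fun z hz ↦ hz.differentiableAt one_ne_zero
  have hgraph : Tendsto (fun t : ℝ ↦ ((t : ℂ), f t)) (𝓝 t₀) (𝓝 ((t₀ : ℂ), f t₀)) :=
    Complex.continuous_ofReal.continuousAt.prodMk_nhds hf
  have hψf : (fun t : ℝ ↦ ψ t) =ᶠ[𝓝 t₀] f := by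
    filter_upwards [hgraph.eventually
      (hG.eventually_apply_eq_iff_implicitFunction one_ne_zero hinv), heq] with t hiff ht
    exact hiff.1 ht
  exact (hψ.restrictScalars.comp (Complex.ofRealCLM.analyticAt t₀)).congr hψf

end ImplicitFunctions

lemma contDiffAt_one_integral_of_dominated {𝕜 α E G : Type*} [RCLike 𝕜] [MeasurableSpace α]
    {μ : Measure α} [NormedAddCommGroup E] [NormedSpace 𝕜 E]
    [NormedAddCommGroup G] [NormedSpace ℝ G] [NormedSpace 𝕜 G]
    {F : E → α → G} {F' : E → α → E →L[𝕜] G} {bound : α → ℝ} {x₀ : E} {s : Set E}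
    (hs : s ∈ 𝓝 x₀) (hF_int : ∀ x ∈ s, Integrable (F x) μ)
    (hF'_meas : ∀ x ∈ s, AEStronglyMeasurable (F' x) μ)
    (h_bound : ∀ᵐ a ∂μ, ∀ x ∈ s, ‖F' x a‖ ≤ bound a) (bound_integrable : Integrable bound μ)
    (h_diff : ∀ᵐ a ∂μ, ∀ x ∈ s, HasFDerivAt (F · a) (F' x a) x)
    (h_cont : ∀ᵐ a ∂μ, ∀ x ∈ s, ContinuousAt (F' · a) x) :
    ContDiffAt 𝕜 1 (fun x ↦ ∫ a, F x a ∂μ) x₀ := by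
  refine contDiffAt_one_iff.2 ⟨fun x ↦ ∫ a, F' x a ∂μ, interior s, interior_mem_nhds.2 hs,
    fun x hx ↦ ContinuousAt.continuousWithinAt ?_, fun x hx ↦ ?_⟩
  all_goals
    have hxs := interior_subset hx
    have hs_nhds := mem_interior_iff_mem_nhds.1 hx
  · exact continuousAt_of_dominated (eventually_of_mem hs_nhds hF'_meas)
      (eventually_of_mem hs_nhds fun y hy ↦ h_bound.mono fun a ha ↦ ha y hy) bound_integrable
      (h_cont.mono fun a ha ↦ ha x hxs)
  · exact hasFDerivAt_integral_of_dominated_of_fderiv_le hs_nhds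
      (eventually_of_mem hs_nhds fun y hy ↦ (hF_int y hy).aestronglyMeasurable)
      (hF_int x hxs) (hF'_meas x hxs) h_bound bound_integrable h_diff

section FunctionalMGF

variable {Ω E : Type*} [MeasurableSpace Ω] [NormedAddCommGroup E] [NormedSpace ℂ E]

/-- The moment generating function of a random continuous linear functional `X`, as a function of
the (complex) vector at which `X` is evaluated. -/
noncomputable def functionalMGF (X : Ω → StrongDual ℂ E) (μ : Measure Ω) (z : E) : ℂ :=
  ∫ ω, Complex.exp (X ω z) ∂μ

lemma norm_cexp_apply_le (L : StrongDual ℂ E) {z w : E} {δ : ℝ} (hw : ‖w - z‖ ≤ δ) :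
    ‖Complex.exp (L w)‖ ≤ Real.exp ((L z).re + δ * ‖L‖) := by
  rw [Complex.norm_exp, Real.exp_le_exp]
  calc (L w).re = (L z).re + (L (w - z)).re := by simp
    _ ≤ (L z).re + ‖L‖ * ‖w - z‖ := by
      gcongr
      exact (Complex.re_le_norm _).trans (L.le_opNorm _)
    _ ≤ (L z).re + δ * ‖L‖ := by
      rw [mul_comm δ]
      gcongr

lemma norm_cexp_apply_smul_le (L : StrongDual ℂ E) {z w : E} {δ : ℝ} (hδ : 0 < δ)
    (hw : ‖w - z‖ ≤ δ) :
    ‖Complex.exp (L w) • L‖ ≤ δ⁻¹ * Real.exp ((L z).re + 2 * δ * ‖L‖) := by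
  have hL : ‖L‖ ≤ δ⁻¹ * Real.exp (δ * ‖L‖) := by
    rw [le_inv_mul_iff₀ hδ]
    linarith [Real.add_one_le_exp (δ * ‖L‖)]
  calc ‖Complex.exp (L w) • L‖ = ‖Complex.exp (L w)‖ * ‖L‖ := norm_smul _ _
    _ ≤ Real.exp ((L z).re + δ * ‖L‖) * (δ⁻¹ * Real.exp (δ * ‖L‖)) := by
      gcongr
      exact norm_cexp_apply_le L hw
    _ = δ⁻¹ * Real.exp ((L z).re + 2 * δ * ‖L‖) := by
      rw [mul_left_comm, ← Real.exp_add]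
      ring_nf

lemma hasFDerivAt_cexp_apply (L : StrongDual ℂ E) (z : E) :
    HasFDerivAt (fun w ↦ Complex.exp (L w)) (Complex.exp (L z) • L) z :=
  L.hasFDerivAt.cexp

variable {X : Ω → StrongDual ℂ E} {μ : Measure Ω} {z : E} {δ : ℝ}

lemma aestronglyMeasurable_cexp_apply (hX : AEStronglyMeasurable X μ) (z : E) :
    AEStronglyMeasurable (fun ω ↦ Complex.exp (X ω z)) μ :=
  Complex.continuous_exp.comp_aestronglyMeasurable (hX.apply_continuousLinearMap z)

lemma integrable_cexp_apply (hX : AEStronglyMeasurable X μ)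
    (hint : Integrable (fun ω ↦ Real.exp ((X ω z).re + δ * ‖X ω‖)) μ) {w : E}
    (hw : ‖w - z‖ ≤ δ) : Integrable (fun ω ↦ Complex.exp (X ω w)) μ :=
  hint.mono' (aestronglyMeasurable_cexp_apply hX w) (.of_forall fun ω ↦ norm_cexp_apply_le (X ω) hw)

lemma integrable_cexp_apply_smul (hX : AEStronglyMeasurable X μ) (hδ : 0 < δ)
    (hint : Integrable (fun ω ↦ Real.exp ((X ω z).re + 2 * δ * ‖X ω‖)) μ) :
    Integrable (fun ω ↦ Complex.exp (X ω z) • X ω) μ :=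
  (hint.const_mul δ⁻¹).mono' ((aestronglyMeasurable_cexp_apply hX z).smul hX)
    (.of_forall fun ω ↦ norm_cexp_apply_smul_le (X ω) hδ (by simpa using hδ.le))

lemma hasFDerivAt_functionalMGF (hX : AEStronglyMeasurable X μ) (hδ : 0 < δ)
    (hint : Integrable (fun ω ↦ Real.exp ((X ω z).re + 2 * δ * ‖X ω‖)) μ) :
    HasFDerivAt (functionalMGF X μ) (∫ ω, Complex.exp (X ω z) • X ω ∂μ) z :=
  hasFDerivAt_integral_of_dominated_of_fderiv_le (Metric.closedBall_mem_nhds z hδ)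
    (.of_forall (aestronglyMeasurable_cexp_apply hX))
    (integrable_cexp_apply hX hint (by simpa using hδ.le))
    ((aestronglyMeasurable_cexp_apply hX z).smul hX)
    (.of_forall fun ω _ hw ↦ norm_cexp_apply_smul_le (X ω) hδ (mem_closedBall_iff_norm.1 hw))
    (hint.const_mul δ⁻¹) (.of_forall fun ω w _ ↦ hasFDerivAt_cexp_apply (X ω) w)

lemma contDiffAt_functionalMGF (hX : AEStronglyMeasurable X μ) (hδ : 0 < δ)
    (hint : Integrable (fun ω ↦ Real.exp ((X ω z).re + 2 * δ * ‖X ω‖)) μ) :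
    ContDiffAt ℂ 1 (functionalMGF X μ) z := by
  refine contDiffAt_one_integral_of_dominated (Metric.closedBall_mem_nhds z hδ) (fun w hw ↦ ?_)
    (fun w _ ↦ (aestronglyMeasurable_cexp_apply hX w).smul hX)
    (.of_forall fun ω _ hw ↦ norm_cexp_apply_smul_le (X ω) hδ (mem_closedBall_iff_norm.1 hw))
    (hint.const_mul δ⁻¹) (.of_forall fun ω w _ ↦ hasFDerivAt_cexp_apply (X ω) w)
    (.of_forall fun ω w _ ↦ by fun_prop)
  exact integrable_cexp_apply hX hint ((mem_closedBall_iff_norm.1 hw).trans (by linarith))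

end FunctionalMGF

lemma integral_pos_of_ae_pos {α : Type*} [MeasurableSpace α] {μ : Measure α} (hμ : μ ≠ 0)
    {f : α → ℝ} (hf : Integrable f μ) (hpos : ∀ᵐ a ∂μ, 0 < f a) : 0 < ∫ a, f a ∂μ := by
  have hsupport : Function.support f =ᵐ[μ] univ :=
    eventuallyEq_univ.2 (hpos.mono fun _ ↦ ne_of_gt)
  rw [integral_pos_iff_support_of_nonneg_ae (hpos.mono fun _ ↦ le_of_lt) hf,
    measure_congr hsupport]
  exact Measure.measure_univ_pos.2 hμ

section RMu

/-- The measure `μ` integrates every centred Gaussian density. -/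
def IntegratesGaussians (μ : Measure ℝ) : Prop :=
  ∀ ε : ℝ, 0 < ε → Integrable (fun θ ↦ Real.exp (-(ε * θ ^ 2) / 2)) μ

/-- The linear functional `(s, y) ↦ -s * θ ^ 2 / 2 + y * θ`, whose value at `(1 / t, x / t)` is the
exponent of `rTheta θ t x`. -/
noncomputable def exponentFunctional (θ : ℝ) : StrongDual ℂ (ℂ × ℂ) :=
  (-(θ : ℂ) ^ 2 / 2) • .fst ℂ ℂ ℂ + (θ : ℂ) • .snd ℂ ℂ ℂ

/-- The extension of `rMu μ` to complex `t` and `x`, given by the same formula; it is meaningful for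
`0 < (1 / t).re`. -/
noncomputable def rMuComplex (μ : Measure ℝ) (p : ℂ × ℂ) : ℂ :=
  ∫ θ : ℝ, Complex.exp (-(θ : ℂ) ^ 2 / (2 * p.1) + θ * p.2 / p.1) ∂μ

lemma rTheta_pos (θ t x : ℝ) : 0 < rTheta θ t x :=
  Real.exp_pos _

lemma continuous_rTheta (t x : ℝ) : Continuous (fun θ ↦ rTheta θ t x) := by
  unfold rTheta
  fun_prop

lemma exponentFunctional_apply (θ : ℝ) (p : ℂ × ℂ) :
    exponentFunctional θ p = -(θ : ℂ) ^ 2 / 2 * p.1 + θ * p.2 := by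
  simp [exponentFunctional]

lemma continuous_exponentFunctional : Continuous exponentFunctional := by
  unfold exponentFunctional
  fun_prop

lemma norm_exponentFunctional_le (θ : ℝ) : ‖exponentFunctional θ‖ ≤ θ ^ 2 / 2 + |θ| := by
  refine (norm_add_le _ _).trans (add_le_add ?_ ?_)
  · simp [norm_smul]
  · simp [norm_smul]

lemma cexp_exponentFunctional_ofReal (θ t x : ℝ) :
    Complex.exp (exponentFunctional θ ((t : ℂ)⁻¹, x / t)) = rTheta θ t x := by
  rw [exponentFunctional_apply, rTheta, Complex.ofReal_exp]
  push_cast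
  ring_nf

lemma cexp_exponentFunctional_smul_apply (θ t x : ℝ) :
    (Complex.exp (exponentFunctional θ ((t : ℂ)⁻¹, x / t)) • exponentFunctional θ)
      (0, (t : ℂ)⁻¹) = (rTheta θ t x * (θ / t) : ℝ) := by
  rw [smul_apply, cexp_exponentFunctional_ofReal, exponentFunctional_apply]
  simp [div_eq_mul_inv]

lemma rMuComplex_eq_functionalMGF_comp (μ : Measure ℝ) :
    rMuComplex μ = functionalMGF exponentFunctional μ ∘ fun p ↦ (p.1⁻¹, p.2 / p.1) := by
  ext p
  unfold rMuComplex functionalMGF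
  simp only [Function.comp_apply, exponentFunctional_apply]
  congr! 3
  ring

lemma rMuComplex_ofReal (μ : Measure ℝ) (t x : ℝ) :
    rMuComplex μ (t, x) = ((rMu μ t x).toReal : ℂ) := by
  simp only [rMuComplex_eq_functionalMGF_comp, Function.comp_apply, functionalMGF,
    cexp_exponentFunctional_ofReal]
  rw [rMu, integral_complex_ofReal, integral_eq_lintegral_of_nonneg_ae
    (.of_forall fun θ ↦ (rTheta_pos θ t x).le) (continuous_rTheta t x).aestronglyMeasurable]

variable {μ : Measure ℝ}

lemma IntegratesGaussians.integrable_exp_neg_mul_sq_add_mul_abs (hμ : IntegratesGaussians μ)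
    {a : ℝ} (ha : 0 < a) (c : ℝ) :
    Integrable (fun θ ↦ Real.exp (-(a * θ ^ 2) + c * |θ|)) μ := by
  refine ((hμ a ha).const_mul (Real.exp (c ^ 2 / (2 * a)))).mono' (by fun_prop)
    (.of_forall fun θ ↦ ?_)
  have hsquare : c ^ 2 / (2 * a) + -(a * θ ^ 2) / 2 - (-(a * θ ^ 2) + c * |θ|)
      = (a * |θ| - c) ^ 2 / (2 * a) := by
    rw [← sq_abs θ]
    field_simp
    ring
  have hnonneg : 0 ≤ (a * |θ| - c) ^ 2 / (2 * a) := by positivity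
  rw [Real.norm_eq_abs, Real.abs_exp, ← Real.exp_add, Real.exp_le_exp]
  linarith

lemma IntegratesGaussians.integrable_exp_re_exponentFunctional (hμ : IntegratesGaussians μ)
    {t : ℝ} (ht : 0 < t) (x : ℝ) :
    Integrable (fun θ ↦ Real.exp ((exponentFunctional θ ((t : ℂ)⁻¹, x / t)).re
      + 2 * (t⁻¹ / 4) * ‖exponentFunctional θ‖)) μ := by
  have hcont := continuous_exponentFunctional
  refine (hμ.integrable_exp_neg_mul_sq_add_mul_abs (div_pos (inv_pos.2 ht) four_pos)
    (|x / t| + t⁻¹ / 2)).mono' (by fun_prop) (.of_forall fun θ ↦ ?_)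
  have hre : (exponentFunctional θ ((t : ℂ)⁻¹, x / t)).re = -θ ^ 2 / 2 * t⁻¹ + θ * (x / t) := by
    simp only [exponentFunctional_apply]
    norm_cast
  have hlinear : θ * (x / t) ≤ |x / t| * |θ| := by
    rw [mul_comm, ← abs_mul]
    exact le_abs_self _
  have hnorm := mul_le_mul_of_nonneg_left (norm_exponentFunctional_le θ)
    (half_pos (inv_pos.2 ht)).le
  rw [Real.norm_eq_abs, Real.abs_exp, Real.exp_le_exp, hre]
  linarith

lemma IntegratesGaussians.integrable_rTheta (hμ : IntegratesGaussians μ) {t : ℝ} (ht : 0 < t)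
    (x : ℝ) : Integrable (fun θ ↦ rTheta θ t x) μ := by
  have hint := integrable_cexp_apply continuous_exponentFunctional.aestronglyMeasurable
    (hμ.integrable_exp_re_exponentFunctional ht x) (by rw [sub_self, norm_zero]; positivity)
  simpa [cexp_exponentFunctional_ofReal] using hint.re

lemma IntegratesGaussians.rMu_ne_top (hμ : IntegratesGaussians μ) {t : ℝ} (ht : 0 < t) (x : ℝ) :
    rMu μ t x ≠ ∞ :=
  (hμ.integrable_rTheta ht x).lintegral_lt_top.ne

lemma IntegratesGaussians.contDiffAt_rMuComplex (hμ : IntegratesGaussians μ) {t : ℝ} (ht : 0 < t)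
    (x : ℝ) : ContDiffAt ℂ 1 (rMuComplex μ) (t, x) := by
  have ht' : (t : ℂ) ≠ 0 := Complex.ofReal_ne_zero.2 ht.ne'
  have hchange : ContDiffAt ℂ 1 (fun p : ℂ × ℂ ↦ (p.1⁻¹, p.2 / p.1)) ((t : ℂ), (x : ℂ)) :=
    (contDiffAt_fst.inv ht').prodMk (contDiffAt_snd.div contDiffAt_fst ht')
  rw [rMuComplex_eq_functionalMGF_comp]
  exact (contDiffAt_functionalMGF continuous_exponentFunctional.aestronglyMeasurable
    (by positivity) (hμ.integrable_exp_re_exponentFunctional ht x)).comp ((t : ℂ), (x : ℂ)) hchange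

lemma IntegratesGaussians.integrable_rTheta_mul_div (hμ : IntegratesGaussians μ) {t : ℝ}
    (ht : 0 < t) (x : ℝ) : Integrable (fun θ ↦ rTheta θ t x * (θ / t)) μ := by
  have hint := (integrable_cexp_apply_smul continuous_exponentFunctional.aestronglyMeasurable
    (by positivity) (hμ.integrable_exp_re_exponentFunctional ht x)).apply_continuousLinearMap
    (0, (t : ℂ)⁻¹)
  simp only [cexp_exponentFunctional_smul_apply] at hint
  simpa using hint.re

lemma IntegratesGaussians.hasDerivAt_rMuComplex_snd (hμ : IntegratesGaussians μ) {t : ℝ}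
    (ht : 0 < t) (x : ℝ) :
    HasDerivAt (fun w : ℂ ↦ rMuComplex μ (t, w)) (∫ θ, rTheta θ t x * (θ / t) ∂μ : ℝ) x := by
  have hmeas := continuous_exponentFunctional.aestronglyMeasurable (μ := μ)
  have hint := hμ.integrable_exp_re_exponentFunctional ht x
  have hline : HasDerivAt (fun w : ℂ ↦ ((t : ℂ)⁻¹, w / t)) (0, (t : ℂ)⁻¹) x := by
    simpa using (hasDerivAt_const _ _).prodMk ((hasDerivAt_id (x : ℂ)).div_const (t : ℂ))
  have hderiv := (hasFDerivAt_functionalMGF hmeas (by positivity) hint).comp_hasDerivAt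
    (x : ℂ) hline
  rw [ContinuousLinearMap.integral_apply (integrable_cexp_apply_smul hmeas (by positivity) hint)]
    at hderiv
  simp only [cexp_exponentFunctional_smul_apply, integral_complex_ofReal] at hderiv
  rw [rMuComplex_eq_functionalMGF_comp]
  exact hderiv

lemma IntegratesGaussians.deriv_rMuComplex_snd_ne_zero (hμ : IntegratesGaussians μ) (hμ₀ : μ ≠ 0)
    (hpos : ∀ᵐ θ ∂μ, 0 < θ) {t : ℝ} (ht : 0 < t) (x : ℝ) :
    deriv (fun w : ℂ ↦ rMuComplex μ (t, w)) x ≠ 0 := by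
  rw [(hμ.hasDerivAt_rMuComplex_snd ht x).deriv, Complex.ofReal_ne_zero]
  exact (integral_pos_of_ae_pos hμ₀ (hμ.integrable_rTheta_mul_div ht x) <| hpos.mono fun θ hθ ↦
    mul_pos (rTheta_pos θ t x) (div_pos hθ ht)).ne'

lemma IntegratesGaussians.strictMono_rMu (hμ : IntegratesGaussians μ) (hμ₀ : μ ≠ 0)
    (hpos : ∀ᵐ θ ∂μ, 0 < θ) {t : ℝ} (ht : 0 < t) : StrictMono (rMu μ t) := by
  intro x y hxy
  refine lintegral_strict_mono hμ₀ (hμ.integrable_rTheta ht y).aemeasurable.ennreal_ofReal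
    (hμ.rMu_ne_top ht x) (hpos.mono fun θ hθ ↦ ?_)
  rw [ENNReal.ofReal_lt_ofReal_iff (rTheta_pos θ t y), rTheta, rTheta]
  gcongr

lemma IntegratesGaussians.continuousAt_rMu (hμ : IntegratesGaussians μ) {t : ℝ} (ht : 0 < t)
    (x : ℝ) : ContinuousAt (fun t' ↦ rMu μ t' x) t := by
  have hcomplex : ContinuousAt (fun t' : ℝ ↦ rMuComplex μ (t', x)) t :=
    (hμ.contDiffAt_rMuComplex ht x).continuousAt.comp' (f := fun t' : ℝ ↦ ((t' : ℂ), (x : ℂ)))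
      (by fun_prop)
  refine (ENNReal.continuous_ofReal.continuousAt.comp
    (Complex.continuous_re.continuousAt.comp hcomplex)).congr ?_
  filter_upwards [lt_mem_nhds ht] with t' ht'
  simp [rMuComplex_ofReal, ENNReal.ofReal_toReal (hμ.rMu_ne_top ht' x)]

theorem analyticAt_of_eventually_rMu_eq (hμ : IntegratesGaussians μ) (hμ₀ : μ ≠ 0)
    (hpos : ∀ᵐ θ ∂μ, 0 < θ) {b : ℝ → ℝ} {t₀ : ℝ} (ht₀ : 0 < t₀) {c : ℝ≥0∞}
    (hb : ∀ᶠ t in 𝓝 t₀, rMu μ t (b t) = c) : AnalyticAt ℝ b t₀ := by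
  have hb_cont : ContinuousAt b t₀ := continuousAt_of_strictMono_of_eventually_apply_eq
    ((lt_mem_nhds ht₀).mono fun t ht ↦ hμ.strictMono_rMu hμ₀ hpos ht)
    (hμ.continuousAt_rMu ht₀) hb
  have hF := hμ.contDiffAt_rMuComplex ht₀ (b t₀)
  have hinv := isInvertible_fderiv_comp_inr_of_deriv_ne_zero (hF.differentiableAt one_ne_zero)
    (hμ.deriv_rMuComplex_snd_ne_zero hμ₀ hpos ht₀ (b t₀))
  have hlevel : ∀ᶠ t : ℝ in 𝓝 t₀, rMuComplex μ (t, b t) = rMuComplex μ (t₀, b t₀) :=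
    hb.mono fun t ht ↦ by rw [rMuComplex_ofReal, rMuComplex_ofReal, ht, hb.self_of_nhds]
  have hb_complex : AnalyticAt ℝ (fun t ↦ (b t : ℂ)) t₀ :=
    analyticAt_of_contDiffAt_of_eventually_apply_eq (f := fun t ↦ (b t : ℂ)) hF hinv
      (Complex.continuous_ofReal.continuousAt.comp hb_cont) hlevel
  exact (Complex.reCLM.analyticAt _).comp hb_complex

end RMu

theorem stmt_0 (μ : Measure ℝ) [SigmaFinite μ] (hμne : μ ≠ 0)
    (hsupp : μ (Set.Ioi (0 : ℝ))ᶜ = 0)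
    (hint : ∀ ε : ℝ, 0 < ε →
      (∫⁻ θ, ENNReal.ofReal (Real.exp (-(ε * θ ^ 2) / 2)) ∂μ) < ⊤)
    (b : ℝ → ℝ)
    (hb : ∀ t ∈ Set.Ioi (0 : ℝ), rMu μ t (b t) = 1) :
    AnalyticOnNhd ℝ b (Set.Ioi 0) := by
  have hgauss : IntegratesGaussians μ := fun ε hε ↦
    (lintegral_ofReal_ne_top_iff_integrable (by fun_prop)
      (.of_forall fun θ ↦ (Real.exp_pos _).le)).1 (hint ε hε).ne
  have hpos : ∀ᵐ θ ∂μ, 0 < θ := ae_iff.2 hsupp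
  exact fun t₀ ht₀ ↦ analyticAt_of_eventually_rMu_eq hgauss hμne hpos ht₀
    (eventually_of_mem (Ioi_mem_nhds ht₀) hb)
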